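/- arXiv:1201.4054 — 5 statements merged into one kernel-verified Lean document; each statement's English description precedes it below -/
import Mathlib

section
/- For every time t, one step of the exponential weighting algorithm satisfies log(W_{t+1}) - log(W_t) ≤ -η · ∑_{j=1}^{N} P_t j · ℓ j t + d_max² · η² / 8. -/
/-!
The ratio `W_{t+1} / W_t` is the average of `exp (-η ℓ j t)` under `P_t`, so the increment of
`log W` is the cumulant-generating function at `-η` of the loss under `P_t`, and Hoeffding's lemma
bounds it.
-/

open MeasureTheory ProbabilityTheory
open Real (exp log)

section Hoeffding

variable {Ω : Type*} [MeasurableSpace Ω] {μ : Measure Ω} {X : Ω → ℝ}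

theorem cgf_sub_const [NeZero μ] {s : ℝ} (hX : Integrable (fun ω ↦ exp (s * X ω)) μ) (c : ℝ) :
    cgf (fun ω ↦ X ω - c) μ s = cgf X μ s - s * c := by
  simp only [cgf, sub_eq_add_neg, mgf_add_const]
  rw [Real.log_mul (mgf_pos' (NeZero.ne μ) hX).ne' (Real.exp_ne_zero _), Real.log_exp, mul_neg]

theorem cgf_le_of_mem_Icc [IsProbabilityMeasure μ] {a b : ℝ} (hX : AEMeasurable X μ)
    (hab : ∀ᵐ ω ∂μ, X ω ∈ Set.Icc a b) (s : ℝ) :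
    cgf X μ s ≤ s * μ[X] + (b - a) ^ 2 * s ^ 2 / 8 := by
  have hcentered := (hasSubgaussianMGF_of_mem_Icc hX hab).cgf_le s
  rw [cgf_sub_const (integrable_exp_mul_of_mem_Icc hX hab)] at hcentered
  have hvariance : (((‖b - a‖₊ / 2) ^ 2 : NNReal) : ℝ) * s ^ 2 / 2 = (b - a) ^ 2 * s ^ 2 / 8 := by
    push_cast
    rw [div_pow, Real.norm_eq_abs, sq_abs]
    ring
  linarith

end Hoeffding

section FiniteWeights

variable {ι : Type*} [Fintype ι]

theorem exists_pmf_toReal_eq_of_mem_stdSimplex {p : ι → ℝ} (hp : p ∈ stdSimplex ℝ ι) :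
    ∃ q : PMF ι, ∀ i, (q i).toReal = p i := by
  have hsum : ∑ i, ENNReal.ofReal (p i) = 1 := by
    rw [← ENNReal.ofReal_sum_of_nonneg fun i _ ↦ hp.1 i, hp.2, ENNReal.ofReal_one]
  exact ⟨PMF.ofFintype _ hsum, fun i ↦ ENNReal.toReal_ofReal (hp.1 i)⟩

theorem div_sum_mem_stdSimplex {w : ι → ℝ} (hw : ∀ i, 0 ≤ w i) (hsum : ∑ i, w i ≠ 0) :
    (fun i ↦ w i / ∑ k, w k) ∈ stdSimplex ℝ ι :=
  ⟨fun i ↦ div_nonneg (hw i) (Finset.sum_nonneg fun k _ ↦ hw k),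
    by rw [← Finset.sum_div, div_self hsum]⟩

theorem log_sum_mul_exp_le_of_mem_stdSimplex {p x : ι → ℝ} {a b : ℝ} (hp : p ∈ stdSimplex ℝ ι)
    (hx : ∀ i, x i ∈ Set.Icc a b) (s : ℝ) :
    log (∑ i, p i * exp (s * x i)) ≤ s * ∑ i, p i * x i + (b - a) ^ 2 * s ^ 2 / 8 := by
  let _ : MeasurableSpace ι := ⊤
  obtain ⟨q, hq⟩ := exists_pmf_toReal_eq_of_mem_stdSimplex hp
  have hcgf := cgf_le_of_mem_Icc (μ := q.toMeasure) (measurable_of_finite x).aemeasurable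
    (ae_of_all _ hx) s
  simpa only [cgf, mgf, PMF.integral_eq_sum, hq, smul_eq_mul] using hcgf

theorem log_sum_mul_exp_sub_log_sum_le {w x : ι → ℝ} {a b : ℝ} (hw : ∀ i, 0 ≤ w i)
    (hsum : ∑ i, w i ≠ 0) (hx : ∀ i, x i ∈ Set.Icc a b) (s : ℝ) :
    log (∑ i, w i * exp (s * x i)) - log (∑ i, w i) ≤
      s * ∑ i, w i / (∑ k, w k) * x i + (b - a) ^ 2 * s ^ 2 / 8 := by
  have hpos : 0 < ∑ i, w i := (Finset.sum_nonneg fun i _ ↦ hw i).lt_of_ne' hsum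
  have hpos_exp : 0 < ∑ i, w i * exp (s * x i) := by
    obtain ⟨i, hi, hwi⟩ := Finset.exists_ne_zero_of_sum_ne_zero hsum
    exact Finset.sum_pos' (fun k _ ↦ mul_nonneg (hw k) (Real.exp_nonneg _))
      ⟨i, hi, mul_pos ((hw i).lt_of_ne' hwi) (Real.exp_pos _)⟩
  calc log (∑ i, w i * exp (s * x i)) - log (∑ i, w i)
      = log (∑ i, w i / (∑ k, w k) * exp (s * x i)) := by
        rw [← Real.log_div hpos_exp.ne' hpos.ne', Finset.sum_div]
        simp only [div_mul_eq_mul_div]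
    _ ≤ s * ∑ i, w i / (∑ k, w k) * x i + (b - a) ^ 2 * s ^ 2 / 8 :=
        log_sum_mul_exp_le_of_mem_stdSimplex (div_sum_mem_stdSimplex hw hsum) hx s

end FiniteWeights

theorem stmt_1_general {ι : Type*} [Fintype ι] [Nonempty ι] {a b : ℝ} (ℓ : ι → ℕ → ℝ) (η : ℝ)
    (L : ι → ℕ → ℝ) (hL : ∀ j t, L j t = ∑ s ∈ Finset.range t, ℓ j s)
    (W : ℕ → ℝ) (hW : ∀ t, W t = ∑ j, exp (-η * L j t))
    (P : ℕ → ι → ℝ) (hP : ∀ t j, P t j = exp (-η * L j t) / W t)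
    (t : ℕ) (hℓ : ∀ j, ℓ j t ∈ Set.Icc a b) :
    log (W (t + 1)) - log (W t) ≤ -η * ∑ j, P t j * ℓ j t + (b - a) ^ 2 * η ^ 2 / 8 := by
  have hweight (j : ι) : exp (-η * L j (t + 1)) = exp (-η * L j t) * exp (-η * ℓ j t) := by
    rw [hL j (t + 1), Finset.sum_range_succ, ← hL, mul_add, Real.exp_add]
  have hWt : ∑ j, exp (-η * L j t) ≠ 0 :=
    (Finset.sum_pos (fun j _ ↦ Real.exp_pos _) Finset.univ_nonempty).ne'
  simpa only [hP, hW, hweight, neg_sq] using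
    log_sum_mul_exp_sub_log_sum_le (fun j ↦ Real.exp_nonneg _) hWt hℓ (-η)

/-- One step of exponential weighting:
`log W_{t+1} - log W_t ≤ -η ∑_j P_t(j) ℓ j t + dmax² η² / 8`. -/
theorem stmt_1 (N : ℕ) (hN : 1 ≤ N) (dmax : ℝ) (hdmax : 0 < dmax)
    (ℓ : Fin N → ℕ → ℝ) (hℓ0 : ∀ j t, 0 ≤ ℓ j t) (hℓd : ∀ j t, ℓ j t ≤ dmax)
    (η : ℝ) (hη : 0 < η)
    (L : Fin N → ℕ → ℝ) (hL : ∀ j t, L j t = ∑ s ∈ Finset.range t, ℓ j s)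
    (W : ℕ → ℝ) (hW : ∀ t, W t = ∑ j : Fin N, Real.exp (-η * L j t))
    (P : ℕ → Fin N → ℝ) (hP : ∀ t j, P t j = Real.exp (-η * L j t) / W t)
    (t : ℕ) :
    Real.log (W (t + 1)) - Real.log (W t) ≤
      -η * ∑ j : Fin N, P t j * ℓ j t + dmax ^ 2 * η ^ 2 / 8 := by
  have : Nonempty (Fin N) := ⟨⟨0, hN⟩⟩
  simpa only [sub_zero] using
    stmt_1_general ℓ η L hL W hW P hP t fun j ↦ ⟨hℓ0 j t, hℓd j t⟩
end

section
/- For every learning rate η > 0 and every horizon n ≥ 1, the expected normalized cumulative loss of the exponential weighting algorithm satisfies (1/n) · A_n ≤ min_{1 ≤ j ≤ N} (1/n) · L j n + log N / (n · η) + d_max² · η / 8. -/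
/-!
The total weight `W_t` is a potential. It starts at `N`, and one round multiplies it by the
`P_t`-expectation of `exp (-η ℓ)`, which by Hoeffding's lemma is at most
`exp (-η E[ℓ] + (b - a)² η² / 8)` for losses in `[a, b]`. Hence
`exp (-η L j n) ≤ W_n ≤ N exp (-η A_n + n (b - a)² η² / 8)` for every sensor `j`, and taking
logarithms bounds the regret against `j`.
-/

open MeasureTheory ProbabilityTheory

section Hoeffding

variable {Ω : Type*} [MeasurableSpace Ω] {μ : Measure Ω} [IsProbabilityMeasure μ] {X : Ω → ℝ}
  {a b : ℝ}

theorem mgf_le_exp_of_mem_Icc (hX : AEMeasurable X μ) (hab : ∀ᵐ ω ∂μ, X ω ∈ Set.Icc a b) (t : ℝ) :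
    mgf X μ t ≤ Real.exp (t * μ[X] + (b - a) ^ 2 * t ^ 2 / 8) := by
  have centered := (hasSubgaussianMGF_of_mem_Icc hX hab).mgf_le t
  have variance_proxy : (((‖b - a‖₊ / 2) ^ 2 : NNReal) : ℝ) * t ^ 2 / 2
      = (b - a) ^ 2 * t ^ 2 / 8 := by
    simp only [NNReal.coe_pow, NNReal.coe_div, coe_nnnorm, NNReal.coe_ofNat, div_pow,
      Real.norm_eq_abs, sq_abs]
    ring
  rw [variance_proxy] at centered
  calc mgf X μ t = mgf (fun ω ↦ μ[X] + (X ω - μ[X])) μ t := by simp only [add_sub_cancel]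
    _ = Real.exp (t * μ[X]) * mgf (fun ω ↦ X ω - μ[X]) μ t := mgf_const_add _
    _ ≤ Real.exp (t * μ[X]) * Real.exp ((b - a) ^ 2 * t ^ 2 / 8) := by gcongr
    _ = Real.exp (t * μ[X] + (b - a) ^ 2 * t ^ 2 / 8) := (Real.exp_add _ _).symm

theorem sum_mul_exp_le_exp_of_mem_Icc {ι : Type*} [Fintype ι] {p x : ι → ℝ}
    (hp : ∀ j, 0 ≤ p j) (hp_sum : ∑ j, p j = 1) (hx : ∀ j, x j ∈ Set.Icc a b) (t : ℝ) :
    ∑ j, p j * Real.exp (t * x j)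
      ≤ Real.exp (t * ∑ j, p j * x j + (b - a) ^ 2 * t ^ 2 / 8) := by
  let _ : MeasurableSpace ι := ⊤
  let q : PMF ι := PMF.ofFintype (fun j ↦ ENNReal.ofReal (p j)) <| by
    rw [← ENNReal.ofReal_sum_of_nonneg fun j _ ↦ hp j, hp_sum, ENNReal.ofReal_one]
  have integral_q (f : ι → ℝ) : ∫ j, f j ∂q.toMeasure = ∑ j, p j * f j := by
    simp [PMF.integral_eq_sum, q, ENNReal.toReal_ofReal (hp _)]
  have hoeffding := mgf_le_exp_of_mem_Icc (μ := q.toMeasure)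
    (measurable_of_finite x).aemeasurable (Filter.Eventually.of_forall hx) t
  rwa [mgf, integral_q, integral_q] at hoeffding

end Hoeffding

/-- The loss `L j t` accumulated by sensor `j` in the rounds `0, …, t - 1`. -/
def cumulativeLoss {ι : Type*} (ℓ : ι → ℕ → ℝ) (j : ι) (t : ℕ) : ℝ :=
  ∑ s ∈ Finset.range t, ℓ j s

section ExponentialWeighting

variable {ι : Type*} [Fintype ι]

/-- The total exponential weight `W_t` at learning rate `η`, the potential function of the
regret analysis. -/
noncomputable def totalWeight (η : ℝ) (ℓ : ι → ℕ → ℝ) (t : ℕ) : ℝ :=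
  ∑ j, Real.exp (-η * cumulativeLoss ℓ j t)

/-- The probability `P_t j` with which exponential weighting draws sensor `j` in round `t`. -/
noncomputable def selectionProb (η : ℝ) (ℓ : ι → ℕ → ℝ) (t : ℕ) (j : ι) : ℝ :=
  Real.exp (-η * cumulativeLoss ℓ j t) / totalWeight η ℓ t

/-- The expected loss `A_n` of exponential weighting over the rounds `0, …, n - 1`, written as
a finite sum because the losses do not depend on the sensors drawn. -/
noncomputable def expectedLoss (η : ℝ) (ℓ : ι → ℕ → ℝ) (n : ℕ) : ℝ :=
  ∑ t ∈ Finset.range n, ∑ j, selectionProb η ℓ t j * ℓ j t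

variable (η : ℝ) (ℓ : ι → ℕ → ℝ)

theorem totalWeight_zero : totalWeight η ℓ 0 = Fintype.card ι := by
  simp [totalWeight, cumulativeLoss]

theorem exp_neg_mul_cumulativeLoss_le_totalWeight (j : ι) (t : ℕ) :
    Real.exp (-η * cumulativeLoss ℓ j t) ≤ totalWeight η ℓ t :=
  Finset.single_le_sum (f := fun i ↦ Real.exp (-η * cumulativeLoss ℓ i t))
    (fun _ _ ↦ (Real.exp_pos _).le) (Finset.mem_univ j)

theorem totalWeight_nonneg (t : ℕ) : 0 ≤ totalWeight η ℓ t :=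
  Finset.sum_nonneg fun _ _ ↦ (Real.exp_pos _).le

theorem selectionProb_nonneg (t : ℕ) (j : ι) : 0 ≤ selectionProb η ℓ t j :=
  div_nonneg (Real.exp_pos _).le (totalWeight_nonneg η ℓ t)

variable [Nonempty ι]

theorem totalWeight_pos (t : ℕ) : 0 < totalWeight η ℓ t :=
  Finset.sum_pos (fun _ _ ↦ Real.exp_pos _) Finset.univ_nonempty

theorem sum_selectionProb (t : ℕ) : ∑ j, selectionProb η ℓ t j = 1 := by
  simp only [selectionProb, ← Finset.sum_div]
  exact div_self (totalWeight_pos η ℓ t).ne'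

theorem totalWeight_succ (t : ℕ) :
    totalWeight η ℓ (t + 1)
      = totalWeight η ℓ t * ∑ j, selectionProb η ℓ t j * Real.exp (-η * ℓ j t) := by
  rw [Finset.mul_sum, totalWeight]
  refine Finset.sum_congr rfl fun j _ ↦ ?_
  rw [selectionProb, ← mul_assoc, mul_div_cancel₀ _ (totalWeight_pos η ℓ t).ne', ← Real.exp_add,
    ← mul_add, cumulativeLoss, Finset.sum_range_succ, cumulativeLoss]

variable {η ℓ} {a b : ℝ}

theorem totalWeight_le (hℓ : ∀ j t, ℓ j t ∈ Set.Icc a b) (n : ℕ) :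
    totalWeight η ℓ n
      ≤ Fintype.card ι * Real.exp (-η * expectedLoss η ℓ n + n * ((b - a) ^ 2 * η ^ 2 / 8)) := by
  induction n with
  | zero => simp [totalWeight_zero, expectedLoss]
  | succ n ih =>
    have hoeffding := sum_mul_exp_le_exp_of_mem_Icc (selectionProb_nonneg η ℓ n)
      (sum_selectionProb η ℓ n) (fun j ↦ hℓ j n) (-η)
    have expectedLoss_succ : expectedLoss η ℓ (n + 1)
        = expectedLoss η ℓ n + ∑ j, selectionProb η ℓ n j * ℓ j n :=
      Finset.sum_range_succ _ n
    calc totalWeight η ℓ (n + 1)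
        = totalWeight η ℓ n * ∑ j, selectionProb η ℓ n j * Real.exp (-η * ℓ j n) :=
          totalWeight_succ η ℓ n
      _ ≤ Fintype.card ι * Real.exp (-η * expectedLoss η ℓ n + n * ((b - a) ^ 2 * η ^ 2 / 8))
            * Real.exp (-η * ∑ j, selectionProb η ℓ n j * ℓ j n
              + (b - a) ^ 2 * (-η) ^ 2 / 8) :=
          mul_le_mul ih hoeffding (Finset.sum_nonneg fun j _ ↦
            mul_nonneg (selectionProb_nonneg η ℓ n j) (Real.exp_pos _).le) (by positivity)
      _ = _ := by
          rw [mul_assoc, ← Real.exp_add, expectedLoss_succ]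
          push_cast
          ring_nf

theorem expectedLoss_le (hη : 0 < η) (hℓ : ∀ j t, ℓ j t ∈ Set.Icc a b) (j : ι) (n : ℕ) :
    expectedLoss η ℓ n
      ≤ cumulativeLoss ℓ j n + Real.log (Fintype.card ι) / η + n * ((b - a) ^ 2 * η / 8) := by
  have log_weight_le : -η * cumulativeLoss ℓ j n ≤ Real.log (Fintype.card ι)
      + (-η * expectedLoss η ℓ n + n * ((b - a) ^ 2 * η ^ 2 / 8)) := by
    have weight_le := (exp_neg_mul_cumulativeLoss_le_totalWeight η ℓ j n).trans
      (totalWeight_le hℓ n)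
    have card_ne_zero : (Fintype.card ι : ℝ) ≠ 0 := Nat.cast_ne_zero.mpr Fintype.card_ne_zero
    rwa [← Real.le_log_iff_exp_le (by positivity), Real.log_mul card_ne_zero (Real.exp_ne_zero _),
      Real.log_exp] at weight_le
  refine le_of_mul_le_mul_left ?_ hη
  calc η * expectedLoss η ℓ n
      ≤ η * cumulativeLoss ℓ j n + Real.log (Fintype.card ι)
          + n * ((b - a) ^ 2 * η ^ 2 / 8) := by linarith
    _ = _ := by field_simp

theorem stmt_3_general (hη : 0 < η) (hℓ : ∀ j t, ℓ j t ∈ Set.Icc a b) {n : ℕ} (hn : n ≠ 0) :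
    (1 / n : ℝ) * expectedLoss η ℓ n ≤
      (Finset.univ.inf' Finset.univ_nonempty fun j ↦ (1 / n : ℝ) * cumulativeLoss ℓ j n)
        + Real.log (Fintype.card ι) / (n * η) + (b - a) ^ 2 * η / 8 := by
  obtain ⟨best, -, inf_eq⟩ := Finset.exists_mem_eq_inf' Finset.univ_nonempty
    fun j ↦ (1 / n : ℝ) * cumulativeLoss ℓ j n
  rw [inf_eq]
  calc (1 / n : ℝ) * expectedLoss η ℓ n
      ≤ (1 / n : ℝ) * (cumulativeLoss ℓ best n + Real.log (Fintype.card ι) / η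
          + n * ((b - a) ^ 2 * η / 8)) := by
        gcongr
        exact expectedLoss_le hη hℓ best n
    _ = _ := by field_simp

end ExponentialWeighting

/-- Regret bound of exponential weighting for any learning rate `η > 0`:
`(1/n) A_n ≤ min_j (1/n) L j n + log N / (n η) + dmax² η / 8`. -/
theorem stmt_3 (N : ℕ) (hN : 1 ≤ N) (dmax : ℝ) (hdmax : 0 < dmax)
    (ℓ : Fin N → ℕ → ℝ) (hℓ0 : ∀ j t, 0 ≤ ℓ j t) (hℓd : ∀ j t, ℓ j t ≤ dmax)
    (η : ℝ) (hη : 0 < η)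
    (L : Fin N → ℕ → ℝ) (hL : ∀ j t, L j t = ∑ s ∈ Finset.range t, ℓ j s)
    (W : ℕ → ℝ) (hW : ∀ t, W t = ∑ j : Fin N, Real.exp (-η * L j t))
    (P : ℕ → Fin N → ℝ) (hP : ∀ t j, P t j = Real.exp (-η * L j t) / W t)
    (A : ℕ → ℝ) (hA : ∀ n, A n = ∑ t ∈ Finset.range n, ∑ j : Fin N, P t j * ℓ j t)
    (n : ℕ) (hn : 1 ≤ n) :
    (1 / n : ℝ) * A n ≤
      (Finset.univ.inf' (Finset.univ_nonempty_iff.mpr ⟨⟨0, hN⟩⟩)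
          fun j => (1 / n : ℝ) * L j n)
        + Real.log N / (n * η) + dmax ^ 2 * η / 8 := by
  obtain rfl : L = cumulativeLoss ℓ := funext₂ hL
  obtain rfl : W = totalWeight η ℓ := funext hW
  obtain rfl : P = selectionProb η ℓ := funext₂ hP
  obtain rfl : A = expectedLoss η ℓ := funext hA
  have : Nonempty (Fin N) := ⟨⟨0, hN⟩⟩
  simpa only [Fintype.card_fin, sub_zero] using
    stmt_3_general hη (fun j t ↦ ⟨hℓ0 j t, hℓd j t⟩) (Nat.one_le_iff_ne_zero.mp hn)
end

section
/- (Submodularity of empirical joint entropy.) For all subsets I, J ⊆ Fin K, the empirical joint entropies satisfy h(I) + h(J) ≥ h(I ∪ J) + h(I ∩ J). Together with h(∅) = 0 and monotonicity, the vector of joint empirical entropies of every realization of the sensors' data defines a polymatroid rank function on the ground set of K sensors. -/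
/-!
The entropy of a joint observation depends only on the partition of the samples into classes of
equal observation, and equals the average of `-log (mass of the class of x)` over the samples `x`.
The partition of `I ∪ J` is the common refinement of those of `I` and `J`, both of which refine that
of `I ∩ J`. Finer partitions have smaller classes, which gives monotonicity. For submodularity,
write `m_r x` for the mass of the `r`-class of `x`; by `log y ≤ y - 1` it suffices that the average
of `m_r x * m_s x / (m_{r ⊓ s} x * m_u x)` is at most `1` when `r, s ≤ u`. Expanding `m_r x` and
`m_s x` as sums over samples `a` and `b`, and summing over `x` first, the `x` that are `r`-related
to `a` and `s`-related to `b` form at most one class of `r ⊓ s`, hence contribute at most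
`1 / m_u a`, and only if `a` and `b` are `u`-related.
-/

lemma log_add_log_sub_le {a b c d : ℝ} (ha : 0 < a) (hb : 0 < b) (hc : 0 < c) (hd : 0 < d) :
    Real.log a + Real.log b - (Real.log c + Real.log d) ≤ a * b / (c * d) - 1 := by
  rw [← Real.log_mul ha.ne' hb.ne', ← Real.log_mul hc.ne' hd.ne',
    ← Real.log_div (by positivity) (by positivity)]
  exact Real.log_le_sub_one_of_pos (by positivity)

section Partition

variable {Ω : Type*} [Fintype Ω] {w : Ω → ℝ} {r s u : Setoid Ω}

open scoped Classical in
/-- The total weight `∑ y ∼ x, w y` of the class of `x` in the partition given by `r`. -/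
noncomputable def classMass (w : Ω → ℝ) (r : Setoid Ω) (x : Ω) : ℝ :=
  ∑ y with r y x, w y

/-- The Shannon entropy (in nats) of the partition given by `r` under the weights `w`, written as an
average over points rather than a sum over classes, so that partitions with different classes can be
compared term by term. -/
noncomputable def partitionEntropy (w : Ω → ℝ) (r : Setoid Ω) : ℝ :=
  -∑ x, w x * Real.log (classMass w r x)

lemma classMass_nonneg (hw : 0 ≤ w) (x : Ω) : 0 ≤ classMass w r x :=
  Finset.sum_nonneg fun y _ => hw y

lemma le_classMass (hw : 0 ≤ w) (x : Ω) : w x ≤ classMass w r x :=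
  Finset.single_le_sum (fun y _ => hw y) (by simp)

lemma classMass_pos (hw : 0 ≤ w) {x : Ω} (hx : 0 < w x) : 0 < classMass w r x :=
  hx.trans_le (le_classMass hw x)

lemma classMass_congr {x y : Ω} (hxy : r x y) : classMass w r x = classMass w r y := by
  classical
  have same_class (z : Ω) : r z x ↔ r z y :=
    ⟨fun hz => r.trans hz hxy, fun hz => r.trans hz (r.symm hxy)⟩
  simp only [classMass, same_class]

lemma classMass_mono (hw : 0 ≤ w) (hrs : r ≤ s) (x : Ω) : classMass w r x ≤ classMass w s x := by
  classical
  exact Finset.sum_le_sum_of_subset_of_nonneg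
    (Finset.monotone_filter_right _ fun _ _ hy => hrs hy) fun y _ _ => hw y

lemma classMass_top (x : Ω) : classMass w ⊤ x = ∑ y, w y := by
  simp [classMass, Setoid.top_def]

open scoped Classical in
lemma sum_class_div_classMass_le_one (x : Ω) :
    ∑ y with r y x, w y / classMass w r y ≤ 1 :=
  calc ∑ y with r y x, w y / classMass w r y
      = ∑ y with r y x, w y / classMass w r x :=
        Finset.sum_congr rfl fun y hy => by rw [classMass_congr (Finset.mem_filter.mp hy).2]
    _ = classMass w r x / classMass w r x := (Finset.sum_div ..).symm
    _ ≤ 1 := div_self_le_one _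

open scoped Classical in
lemma sum_inter_div_classMass_inf_le_one (a b : Ω) :
    ∑ x with r a x ∧ s b x, w x / classMass w (r ⊓ s) x ≤ 1 := by
  obtain hempty | ⟨z, hz⟩ := (Finset.univ.filter fun x => r a x ∧ s b x).eq_empty_or_nonempty
  · simp [hempty]
  obtain ⟨haz, hbz⟩ := (Finset.mem_filter.mp hz).2
  have inter_eq_class (x : Ω) : (r a x ∧ s b x) ↔ (r ⊓ s) x z :=
    and_congr ⟨fun h => r.trans (r.symm h) haz, fun h => r.trans haz (r.symm h)⟩
      ⟨fun h => s.trans (s.symm h) hbz, fun h => s.trans hbz (s.symm h)⟩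
  simpa only [inter_eq_class] using sum_class_div_classMass_le_one z

open scoped Classical in
lemma sum_inter_div_classMass_le (hw : 0 ≤ w) (hru : r ≤ u) (hsu : s ≤ u) (a b : Ω) :
    ∑ x with r a x ∧ s b x, w x / (classMass w (r ⊓ s) x * classMass w u x) ≤
      if u b a then (classMass w u a)⁻¹ else 0 := by
  split_ifs with hba
  · calc ∑ x with r a x ∧ s b x, w x / (classMass w (r ⊓ s) x * classMass w u x)
        = (∑ x with r a x ∧ s b x, w x / classMass w (r ⊓ s) x) * (classMass w u a)⁻¹ := by
          rw [Finset.sum_mul]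
          refine Finset.sum_congr rfl fun x hx => ?_
          rw [classMass_congr (hru (Finset.mem_filter.mp hx).2.1), div_mul_eq_div_div,
            div_eq_mul_inv _ (classMass w u x)]
      _ ≤ (classMass w u a)⁻¹ :=
          mul_le_of_le_one_left (inv_nonneg.mpr (classMass_nonneg hw a))
            (sum_inter_div_classMass_inf_le_one a b)
  · refine (Finset.sum_eq_zero fun x hx => absurd ?_ hba).le
    obtain ⟨hax, hbx⟩ := (Finset.mem_filter.mp hx).2
    exact u.trans (hsu hbx) (u.symm (hru hax))

open scoped Classical in
lemma sum_mul_classMass_ratio_eq :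
    ∑ x, w x * (classMass w r x * classMass w s x / (classMass w (r ⊓ s) x * classMass w u x)) =
      ∑ a, w a * ∑ b, w b *
        ∑ x with r a x ∧ s b x, w x / (classMass w (r ⊓ s) x * classMass w u x) := by
  have expand (x : Ω) : classMass w r x * classMass w s x =
      ∑ a, ∑ b, if r a x ∧ s b x then w a * w b else 0 := by
    simp only [classMass, Finset.sum_filter, Finset.sum_mul_sum, ite_zero_mul_ite_zero]
  simp only [expand, Finset.sum_div, Finset.mul_sum, Finset.sum_filter]
  rw [Finset.sum_comm]
  refine Finset.sum_congr rfl fun a _ => ?_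
  rw [Finset.sum_comm]
  refine Finset.sum_congr rfl fun b _ => Finset.sum_congr rfl fun x _ => ?_
  split_ifs <;> ring

lemma sum_mul_classMass_ratio_le (hw : 0 ≤ w) (hru : r ≤ u) (hsu : s ≤ u) :
    ∑ x, w x * (classMass w r x * classMass w s x / (classMass w (r ⊓ s) x * classMass w u x)) ≤
      ∑ x, w x := by
  classical
  rw [sum_mul_classMass_ratio_eq]
  refine Finset.sum_le_sum fun a _ => mul_le_of_le_one_right (hw a) ?_
  calc ∑ b, w b * ∑ x with r a x ∧ s b x, w x / (classMass w (r ⊓ s) x * classMass w u x)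
      ≤ ∑ b, w b * if u b a then (classMass w u a)⁻¹ else 0 :=
        Finset.sum_le_sum fun b _ =>
          mul_le_mul_of_nonneg_left (sum_inter_div_classMass_le hw hru hsu a b) (hw b)
    _ = classMass w u a / classMass w u a := by
        simp only [mul_ite, mul_zero, ← Finset.sum_filter, ← Finset.sum_mul, div_eq_mul_inv]
        rfl
    _ ≤ 1 := div_self_le_one _

lemma partitionEntropy_top (hw : ∑ x, w x = 1) : partitionEntropy w ⊤ = 0 := by
  simp [partitionEntropy, classMass_top, hw]

lemma partitionEntropy_anti (hw : 0 ≤ w) (hrs : r ≤ s) :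
    partitionEntropy w s ≤ partitionEntropy w r := by
  refine neg_le_neg (Finset.sum_le_sum fun x _ => ?_)
  obtain hx | hx := (hw x).eq_or_lt
  · simp [← hx]
  · exact mul_le_mul_of_nonneg_left
      (Real.log_le_log (classMass_pos hw hx) (classMass_mono hw hrs x)) hx.le

lemma partitionEntropy_inf_add_le (hw : 0 ≤ w) (hru : r ≤ u) (hsu : s ≤ u) :
    partitionEntropy w (r ⊓ s) + partitionEntropy w u ≤
      partitionEntropy w r + partitionEntropy w s := by
  have pointwise (x : Ω) :
      w x * (Real.log (classMass w r x) + Real.log (classMass w s x) -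
        (Real.log (classMass w (r ⊓ s) x) + Real.log (classMass w u x))) ≤
      w x *
        (classMass w r x * classMass w s x / (classMass w (r ⊓ s) x * classMass w u x) - 1) := by
    obtain hx | hx := (hw x).eq_or_lt
    · simp [← hx]
    · exact mul_le_mul_of_nonneg_left (log_add_log_sub_le (classMass_pos hw hx)
        (classMass_pos hw hx) (classMass_pos hw hx) (classMass_pos hw hx)) hx.le
  have summed := Finset.sum_le_sum fun x (_ : x ∈ Finset.univ) => pointwise x
  simp only [mul_sub, mul_add, mul_one, Finset.sum_sub_distrib, Finset.sum_add_distrib] at summed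
  have ratio_le := sum_mul_classMass_ratio_le hw hru hsu
  simp only [partitionEntropy]
  linarith

lemma partitionEntropy_ker {β : Type*} [Fintype β] [DecidableEq β] (w : Ω → ℝ) (f : Ω → β) :
    partitionEntropy w (Setoid.ker f) = ∑ b, Real.negMulLog (∑ x with f x = b, w x) := by
  have classMass_ker (x : Ω) : classMass w (Setoid.ker f) x = ∑ y with f y = f x, w y := by
    simp only [classMass, Setoid.ker_def]
  calc partitionEntropy w (Setoid.ker f)
      = -∑ b, ∑ x with f x = b, w x * Real.log (∑ y with f y = f x, w y) := by
        simp only [partitionEntropy, classMass_ker, Finset.sum_fiberwise]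
    _ = -∑ b, ∑ x with f x = b, w x * Real.log (∑ y with f y = b, w y) := by
        refine congrArg _ (Finset.sum_congr rfl fun b _ => Finset.sum_congr rfl fun x hx => ?_)
        rw [(Finset.mem_filter.mp hx).2]
    _ = ∑ b, Real.negMulLog (∑ x with f x = b, w x) := by
        simp only [Real.negMulLog, ← Finset.sum_mul, neg_mul, Finset.sum_neg_distrib]

end Partition

section Agreement

variable {Ω ι : Type*} {A : ι → Type*} (p : ∀ j, Ω → A j)

/-- Two samples are related when all sensors in `S` read the same on both; the classes are the
nonempty level sets of the joint observation of `S`. -/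
def agreeOn (S : Finset ι) : Setoid Ω :=
  Setoid.ker fun t (j : S) => p j t

lemma agreeOn_iff {S : Finset ι} {x y : Ω} : agreeOn p S x y ↔ ∀ j ∈ S, p j x = p j y :=
  funext_iff.trans Subtype.forall

lemma agreeOn_empty : agreeOn p ∅ = ⊤ := by
  ext x y
  simp [agreeOn_iff, Setoid.top_def]

lemma agreeOn_anti {I J : Finset ι} (hIJ : I ⊆ J) : agreeOn p J ≤ agreeOn p I :=
  fun _ _ hxy => (agreeOn_iff p).mpr fun j hj => (agreeOn_iff p).mp hxy j (hIJ hj)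

lemma agreeOn_union [DecidableEq ι] (I J : Finset ι) :
    agreeOn p (I ∪ J) = agreeOn p I ⊓ agreeOn p J := by
  ext x y
  simp only [Setoid.inf_iff_and, agreeOn_iff, Finset.forall_mem_union]

lemma partitionEntropy_agreeOn [Fintype Ω] [∀ j, Fintype (A j)] [∀ j, DecidableEq (A j)]
    [DecidableEq ι] (w : Ω → ℝ) (S : Finset ι) :
    partitionEntropy w (agreeOn p S) = ∑ v : ∀ j : S, A j,
      Real.negMulLog (∑ t with ∀ j (hj : j ∈ S), p j t = v ⟨j, hj⟩, w t) := by
  simp only [agreeOn, partitionEntropy_ker, funext_iff, Subtype.forall]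

end Agreement

theorem stmt_8_general {Ω ι : Type*} [Fintype Ω] [DecidableEq ι] {A : ι → Type*}
    [∀ j, Fintype (A j)] [∀ j, DecidableEq (A j)] {w : Ω → ℝ} (hw : w ∈ stdSimplex ℝ Ω)
    (p : ∀ j, Ω → A j) (h : Finset ι → ℝ)
    (hh : ∀ S : Finset ι, h S = ∑ v : ∀ j : S, A j,
      Real.negMulLog (∑ t with ∀ j (hj : j ∈ S), p j t = v ⟨j, hj⟩, w t)) :
    (∀ I J : Finset ι, h I + h J ≥ h (I ∪ J) + h (I ∩ J)) ∧
      h ∅ = 0 ∧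
      (∀ I J : Finset ι, I ⊆ J → h I ≤ h J) := by
  obtain ⟨w_nonneg, w_sum⟩ := hw
  have h_eq (S : Finset ι) : h S = partitionEntropy w (agreeOn p S) :=
    (hh S).trans (partitionEntropy_agreeOn p w S).symm
  simp only [h_eq, agreeOn_empty, agreeOn_union]
  exact ⟨fun I J => partitionEntropy_inf_add_le w_nonneg
      (agreeOn_anti p Finset.inter_subset_left) (agreeOn_anti p Finset.inter_subset_right),
    partitionEntropy_top w_sum,
    fun I J hIJ => partitionEntropy_anti w_nonneg (agreeOn_anti p hIJ)⟩

/-- Submodularity of empirical joint entropy: `h(I) + h(J) ≥ h(I ∪ J) + h(I ∩ J)`.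
Together with `h(∅) = 0` and monotonicity, the vector of joint empirical entropies of
every realization of the sensors' data defines a polymatroid rank function on the
ground set of `K` sensors. -/
theorem stmt_8 (A : Type*) [Fintype A] [DecidableEq A] [Nonempty A]
    (K n : ℕ) (hK : 1 ≤ K) (hn : 1 ≤ n)
    (p : Fin K → Fin n → A)
    (h : Finset (Fin K) → ℝ)
    (hh : ∀ S : Finset (Fin K), h S = ∑ w : S → A,
      Real.negMulLog
        (((Finset.univ.filter fun t : Fin n =>
            ∀ j (hj : j ∈ S), p j t = w ⟨j, hj⟩).card : ℝ) / n)) :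
    (∀ I J : Finset (Fin K), h I + h J ≥ h (I ∪ J) + h (I ∩ J)) ∧
      h ∅ = 0 ∧
      (∀ I J : Finset (Fin K), I ⊆ J → h I ≤ h J) := by
  have uniform_mem : (fun _ => (n : ℝ)⁻¹) ∈ stdSimplex ℝ (Fin n) :=
    ⟨fun _ => by positivity, by simp [Nat.one_le_iff_ne_zero.mp hn]⟩
  refine stmt_8_general uniform_mem p h fun S => (hh S).trans ?_
  simp only [Finset.sum_const, nsmul_eq_mul, div_eq_mul_inv]
  congr!
end

section
/- (Greedy step bound for an approximately submodular estimate.) Let ι be a finite type, let f : Finset ι → ℝ be submodular, and let g : Finset ι → ℝ satisfy |g(S) - f(S)| ≤ δ for all finsets S, where δ ≥ 0 (g models the Lempel–Ziv entropy estimate, which approximates the true entropies f up to δ). Let I be a finset and j* ∉ I an element maximizing g(I ∪ {j}) over j ∉ I, and suppose g(I ∪ {j*}) ≤ g(I) + ε for some ε ≥ 0. Then for every j' ∉ I ∪ {j*}, g(I ∪ {j*} ∪ {j'}) ≤ g(I ∪ {j*}) + ε + 4δ. -/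
/-!
Moving each value of a submodular function by at most `δ` costs at most `4δ` in the submodular
inequality, which involves four values. Applied to `I ∪ {j*}` and `I ∪ {j'}`, whose intersection
is `I`, it bounds the gain of `j'` over `I ∪ {j*}` by its gain over `I` plus `4δ`; the greedy
choice of `j*` bounds that gain by `ε`.
-/

/-- `g` is submodular up to an additive defect `c`; `c = 0` is exact submodularity. On `Finset ι`
the lattice operations are union and intersection. -/
def IsApproxSubmodular {α R : Type*} [Lattice α] [Add R] [LE R] (c : R) (g : α → R) : Prop :=
  ∀ x y, g (x ⊔ y) + g (x ⊓ y) ≤ g x + g y + c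

namespace IsApproxSubmodular

theorem of_abs_sub_le {α R : Type*} [Lattice α] [AddCommGroup R] [LinearOrder R]
    [IsOrderedAddMonoid R] {c : R} {f g : α → R} {δ : R}
    (hf : IsApproxSubmodular c f) (happrox : ∀ x, |g x - f x| ≤ δ) :
    IsApproxSubmodular (c + 4 • δ) g := by
  intro x y
  have upper (z : α) : g z ≤ f z + δ := sub_le_iff_le_add'.mp (abs_le.mp (happrox z)).2
  have lower (z : α) : f z ≤ g z + δ := sub_le_iff_le_add'.mp (abs_sub_le_iff.mp (happrox z)).2
  calc
    g (x ⊔ y) + g (x ⊓ y) ≤ (f (x ⊔ y) + δ) + (f (x ⊓ y) + δ) := by gcongr <;> exact upper _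
    _ = (f (x ⊔ y) + f (x ⊓ y)) + 2 • δ := by abel
    _ ≤ (f x + f y + c) + 2 • δ := by gcongr ?_ + _; exact hf x y
    _ ≤ ((g x + δ) + (g y + δ) + c) + 2 • δ := by gcongr <;> exact lower _
    _ = g x + g y + (c + 4 • δ) := by abel

variable {α R : Type*} [DistribLattice α] [OrderBot α] [AddCommGroup R] [PartialOrder R]
  [IsOrderedAddMonoid R] {c : R} {g : α → R} {x a b : α}

theorem sub_le_sub_add_of_disjoint (hg : IsApproxSubmodular c g) (hab : Disjoint a b) :
    g (x ⊔ a ⊔ b) - g (x ⊔ a) ≤ g (x ⊔ b) - g x + c := by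
  have hsup : (x ⊔ a) ⊔ (x ⊔ b) = x ⊔ a ⊔ b := by rw [← sup_sup_distrib_left, sup_assoc]
  have hinf : (x ⊔ a) ⊓ (x ⊔ b) = x := by rw [← sup_inf_left, hab.eq_bot, sup_bot_eq]
  have hle : g (x ⊔ a ⊔ b) + g x ≤ g (x ⊔ a) + g (x ⊔ b) + c := by
    simpa only [hsup, hinf] using hg (x ⊔ a) (x ⊔ b)
  calc
    g (x ⊔ a ⊔ b) - g (x ⊔ a) ≤ (g (x ⊔ a) + g (x ⊔ b) + c - g x) - g (x ⊔ a) := by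
      gcongr ?_ - _; exact le_sub_iff_add_le.mpr hle
    _ = g (x ⊔ b) - g x + c := by abel

theorem le_add_of_greedy_step (hg : IsApproxSubmodular c g) (hab : Disjoint a b)
    (hmax : g (x ⊔ b) ≤ g (x ⊔ a)) {ε : R} (hstep : g (x ⊔ a) ≤ g x + ε) :
    g (x ⊔ a ⊔ b) ≤ g (x ⊔ a) + ε + c := by
  have hgain : g (x ⊔ b) - g x ≤ ε := sub_le_iff_le_add'.mpr (hmax.trans hstep)
  have hbound : g (x ⊔ a ⊔ b) - g (x ⊔ a) ≤ ε + c :=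
    (hg.sub_le_sub_add_of_disjoint hab).trans (by gcongr)
  rw [add_assoc]
  exact sub_le_iff_le_add'.mp hbound

end IsApproxSubmodular

theorem stmt_14_general {ι R : Type*} [DecidableEq ι]
    [AddCommGroup R] [LinearOrder R] [IsOrderedAddMonoid R] {f g : Finset ι → R}
    (hsub : ∀ I J : Finset ι, f I + f J ≥ f (I ∪ J) + f (I ∩ J))
    {δ : R} (happrox : ∀ S : Finset ι, |g S - f S| ≤ δ) {I : Finset ι} {jstar : ι}
    (hmax : ∀ j ∉ I, g (I ∪ {j}) ≤ g (I ∪ {jstar}))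
    {ε : R} (hstep : g (I ∪ {jstar}) ≤ g I + ε) :
    ∀ j' ∉ I ∪ {jstar}, g (I ∪ {jstar} ∪ {j'}) ≤ g (I ∪ {jstar}) + ε + 4 • δ := by
  intro j' hj'
  obtain ⟨hnotMem, hne⟩ : j' ∉ I ∧ j' ∉ ({jstar} : Finset ι) := Finset.notMem_union.mp hj'
  have hf : IsApproxSubmodular 0 f := fun S T ↦ by simpa using hsub S T
  have hg : IsApproxSubmodular (4 • δ) g := by simpa using hf.of_abs_sub_le happrox
  exact hg.le_add_of_greedy_step (Finset.disjoint_singleton_right.mpr hne) (hmax j' hnotMem) hstep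

/-- Greedy step bound for an approximately submodular estimate: if `g` (the
Lempel–Ziv entropy estimate) is within `δ` of a submodular `f` (the true entropies),
`j* ∉ I` maximizes `g(I ∪ {j})` over `j ∉ I`, and `g(I ∪ {j*}) ≤ g(I) + ε`, then for
every `j' ∉ I ∪ {j*}`, `g(I ∪ {j*} ∪ {j'}) ≤ g(I ∪ {j*}) + ε + 4δ`. -/
theorem stmt_14 (ι : Type*) [Fintype ι] [DecidableEq ι]
    (f g : Finset ι → ℝ)
    (hsub : ∀ I J : Finset ι, f I + f J ≥ f (I ∪ J) + f (I ∩ J))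
    (δ : ℝ) (hδ : 0 ≤ δ) (happrox : ∀ S : Finset ι, |g S - f S| ≤ δ)
    (I : Finset ι) (jstar : ι) (hjstar : jstar ∉ I)
    (hmax : ∀ j ∉ I, g (I ∪ {j}) ≤ g (I ∪ {jstar}))
    (ε : ℝ) (hε : 0 ≤ ε) (hstep : g (I ∪ {jstar}) ≤ g I + ε) :
    ∀ j' ∉ I ∪ {jstar},
      g (I ∪ {jstar} ∪ {j'}) ≤ g (I ∪ {jstar}) + ε + 4 * δ := by
  simpa using stmt_14_general hsub happrox hmax hstep
end

section
/- (Early stopping of greedy selection with estimation error.) Let ι be a finite type, let f : Finset ι → ℝ be submodular, and let g : Finset ι → ℝ satisfy |g(S) - f(S)| ≤ δ for all finsets S, where δ ≥ 0. Let I be a finset and ε ≥ 0, and suppose g(I ∪ {j}) ≤ g(I) + ε for every j ∉ I (the greedy algorithm run on g stopped at I because no single element improves the estimate by more than ε). Then for every finset J with I ⊆ J, g(J) ≤ g(I) + |J \ I| · (ε + 2δ) + 2δ. In particular, with at most |ι| elements in total, the estimated entropy of any set reachable by continuing the algorithm exceeds that of the currently selected subset by at most |ι| · (ε + 2δ) +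 2δ, i.e. by |ι| · ε plus a term that vanishes as the estimation error δ → 0. -/
/-!
Submodularity means diminishing returns: passing from `I` to `I ∪ K` gains at most the sum of the
gains of adding the elements of `K` to `I` one at a time. Replacing `g` by `f` changes any gain by
at most `2δ`, so the stopping rule for `g` bounds each single-element gain of `f` by `ε + 2δ`; going
back from `f` to `g` for the total gain costs the last `2δ`.
-/

open Finset

/-- Submodularity of a function on a lattice. For functions on `Finset ι`, where `⊔` and `⊓` are
union and intersection, this is submodularity of a set function. -/
def IsSubmodular {α M : Type*} [Lattice α] [Add M] [LE M] (f : α → M) : Prop :=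
  ∀ a b, f (a ⊔ b) + f (a ⊓ b) ≤ f a + f b

namespace IsSubmodular

variable {ι M : Type*} [DecidableEq ι] [AddCommGroup M] [PartialOrder M] [IsOrderedAddMonoid M]
  {f : Finset ι → M}

theorem map_union_singleton_sub_le (hf : IsSubmodular f) (I : Finset ι) {K : Finset ι} {a : ι}
    (ha : a ∉ K) : f (I ∪ (K ∪ {a})) - f (I ∪ K) ≤ f (I ∪ {a}) - f I := by
  have union_eq : (I ∪ K) ∪ (I ∪ {a}) = I ∪ (K ∪ {a}) := (union_union_distrib_left ..).symm
  have inter_eq : (I ∪ K) ∩ (I ∪ {a}) = I := by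
    rw [← union_inter_distrib_left, inter_singleton_of_notMem ha, union_empty]
  have submodularity : f (I ∪ (K ∪ {a})) + f I ≤ f (I ∪ K) + f (I ∪ {a}) := by
    simpa only [sup_eq_union, inf_eq_inter, union_eq, inter_eq] using hf (I ∪ K) (I ∪ {a})
  rwa [sub_le_sub_iff, add_comm (f (I ∪ {a}))]

theorem map_union_sub_le_sum (hf : IsSubmodular f) (I K : Finset ι) :
    f (I ∪ K) - f I ≤ ∑ j ∈ K, (f (I ∪ {j}) - f I) := by
  induction K using Finset.induction_on with
  | empty => simp
  | insert a K ha ih =>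
    rw [sum_insert ha, ← union_singleton,
      ← sub_add_sub_cancel (f (I ∪ (K ∪ {a}))) (f (I ∪ K)) (f I)]
    exact add_le_add (hf.map_union_singleton_sub_le I ha) ih

theorem map_sub_le_card_sdiff_nsmul (hf : IsSubmodular f) {I J : Finset ι} (hIJ : I ⊆ J) {c : M}
    (hc : ∀ j ∈ J \ I, f (I ∪ {j}) - f I ≤ c) : f J - f I ≤ #(J \ I) • c :=
  calc f J - f I = f (I ∪ J \ I) - f I := by rw [union_sdiff_of_subset hIJ]
    _ ≤ ∑ j ∈ J \ I, (f (I ∪ {j}) - f I) := hf.map_union_sub_le_sum I (J \ I)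
    _ ≤ #(J \ I) • c := sum_le_card_nsmul _ _ c hc

end IsSubmodular

section Approximation

variable {M : Type*} [AddCommGroup M] [LinearOrder M] [IsOrderedAddMonoid M]

theorem sub_le_sub_add_two_nsmul_of_abs_sub_le {a a' b b' δ : M} (ha : |a' - a| ≤ δ)
    (hb : |b' - b| ≤ δ) : a - b ≤ a' - b' + 2 • δ :=
  calc a - b = a' - b' + ((b' - b) - (a' - a)) := by abel
    _ ≤ a' - b' + (δ - -δ) := by
      gcongr
      · exact (abs_le.mp hb).2
      · exact (abs_le.mp ha).1
    _ = a' - b' + 2 • δ := by abel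

theorem stmt_15_general {ι : Type*} [DecidableEq ι] {f g : Finset ι → M} (hf : IsSubmodular f)
    {δ : M} (hfg : ∀ S, |g S - f S| ≤ δ) {I J : Finset ι} (hIJ : I ⊆ J) {ε : M}
    (hstep : ∀ j ∈ J \ I, g (I ∪ {j}) ≤ g I + ε) :
    g J ≤ g I + #(J \ I) • (ε + 2 • δ) + 2 • δ := by
  have single_gain_le : ∀ j ∈ J \ I, f (I ∪ {j}) - f I ≤ ε + 2 • δ := fun j hj ↦
    calc f (I ∪ {j}) - f I ≤ g (I ∪ {j}) - g I + 2 • δ :=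
          sub_le_sub_add_two_nsmul_of_abs_sub_le (hfg _) (hfg _)
      _ ≤ ε + 2 • δ := by gcongr; exact sub_le_iff_le_add'.mpr (hstep j hj)
  have hgf : ∀ S, |f S - g S| ≤ δ := fun S ↦ abs_sub_comm (g S) (f S) ▸ hfg S
  rw [add_assoc, ← sub_le_iff_le_add']
  calc g J - g I ≤ f J - f I + 2 • δ :=
        sub_le_sub_add_two_nsmul_of_abs_sub_le (hgf J) (hgf I)
    _ ≤ #(J \ I) • (ε + 2 • δ) + 2 • δ := by
      gcongr
      exact hf.map_sub_le_card_sdiff_nsmul hIJ single_gain_le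

end Approximation

/-- Early stopping of greedy selection with estimation error: if `g` is within `δ` of
a submodular `f` and no single element improves `g` at `I` by more than `ε`, then for
every `J ⊇ I`, `g(J) ≤ g(I) + |J \ I| (ε + 2δ) + 2δ`; with at most `|ι|` elements in
total, the estimated entropy of any set reachable by continuing the algorithm exceeds
that of the currently selected subset by at most `|ι| ε` plus a term vanishing as
`δ → 0`. -/
theorem stmt_15 (ι : Type*) [Fintype ι] [DecidableEq ι]
    (f g : Finset ι → ℝ)
    (hsub : ∀ I J : Finset ι, f I + f J ≥ f (I ∪ J) + f (I ∩ J))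
    (δ : ℝ) (hδ : 0 ≤ δ) (happrox : ∀ S : Finset ι, |g S - f S| ≤ δ)
    (I : Finset ι) (ε : ℝ) (hε : 0 ≤ ε)
    (hstep : ∀ j ∉ I, g (I ∪ {j}) ≤ g I + ε) :
    ∀ J : Finset ι, I ⊆ J →
      g J ≤ g I + ((J \ I).card : ℝ) * (ε + 2 * δ) + 2 * δ := by
  intro J hIJ
  simpa only [nsmul_eq_mul, Nat.cast_ofNat] using
    stmt_15_general hsub happrox hIJ fun j hj ↦ hstep j (mem_sdiff.mp hj).2
end
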